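/- arXiv:1908.00651 — 4 statements merged into one kernel-verified Lean document; each statement's English description precedes it below -/
import Mathlib

section
/- Fiberwise interpolation of negative-definite isotropic subspaces (pointwise form of the paper's Proposition on interpolating strictly negative Lagrangian distributions): Let E be a finite-dimensional complex vector space and ω a symmetric ℂ-bilinear form on E. Let E₀ and E₁ be real subspaces of E, both Im ω-isotropic, and suppose Re ω is negative definite on E₀ and on E₁. Assume E is the internal direct sum (as a real vector space) of E₁ and i·E₁, and let π : E → E be the ℝ-linear projection onto E₁ with kernel i·E₁. For t ∈ ℝ define the ℝ-linear map π_t : E₀ → E by π_t(e) = e − t·(e − π(e)). Then for every t ∈ [0,1]: (a) π_t is injective on E₀; (b) the image π_t(E₀) is Im ω-isotropic; (c) Re ω is negative definite on π_t(E₀). Moreover π_0 is the inclusion of E₀ into E, and if finrank_ℝ E₀ = finrank_ℝ E₁ then π_1(E₀) = E₁. -/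
/-!
Since `E₁` is `Im ω`-isotropic, so is `i E₁`, and `E₁`, `i E₁` are `Re ω`-orthogonal. Writing
`e = v + w` with `v ∈ E₁`, `w ∈ i E₁` and `s = 1 - t`, we have `π_t e = v + s w`, hence
`Im ω (π_t e, π_t e') = s Im ω (e, e')` and `Re ω (π_t e, π_t e) = Re ω (v, v) + s² Re ω (w, w)`.
As `Re ω (w, w) ≥ 0`, the latter is at most `Re ω (e, e)` as soon as `s² ≤ 1`.
Definiteness forces `π_t` to be injective on `E₀`, and for `t = 1` a dimension count finishes.
-/

open Complex Module

noncomputable def mulI (E : Type*) [AddCommGroup E] [Module ℂ E] : E →ₗ[ℝ] E where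
  toFun v := Complex.I • v
  map_add' v w := smul_add _ _ _
  map_smul' t v := (smul_comm t Complex.I v).symm

def ImIsotropic {E : Type*} [AddCommGroup E] [Module ℂ E]
    (ω : E →ₗ[ℂ] E →ₗ[ℂ] ℂ) (V : Submodule ℝ E) : Prop :=
  ∀ v ∈ V, ∀ w ∈ V, (ω v w).im = 0

def ReNegDef {E : Type*} [AddCommGroup E] [Module ℂ E]
    (ω : E →ₗ[ℂ] E →ₗ[ℂ] ℂ) (V : Submodule ℝ E) : Prop :=
  ∀ v ∈ V, v ≠ 0 → (ω v v).re < 0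

section BilinearForm

variable {R M : Type*}

theorem bilin_apply_add_smul_add_smul [CommSemiring R] [AddCommMonoid M] [Module R M]
    (B : M →ₗ[R] M →ₗ[R] R) {v w v' w' : M} (hv : B v v' = 0) (hw : B w w' = 0) (s : R) :
    B (v + s • w) (v' + s • w') = s * B (v + w) (v' + w') := by
  simp only [map_add, map_smul, LinearMap.add_apply, LinearMap.smul_apply, smul_eq_mul, hv, hw]
  ring

theorem bilin_apply_add_smul_self [CommSemiring R] [AddCommMonoid M] [Module R M]
    (B : M →ₗ[R] M →ₗ[R] R) {v w : M} (hvw : B v w = 0) (hwv : B w v = 0) (s : R) :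
    B (v + s • w) (v + s • w) = B v v + s ^ 2 * B w w := by
  simp only [map_add, map_smul, LinearMap.add_apply, LinearMap.smul_apply, smul_eq_mul, hvw, hwv]
  ring

theorem bilin_apply_add_smul_self_le [CommSemiring R] [PartialOrder R] [IsOrderedRing R]
    [AddCommMonoid M] [Module R M] (B : M →ₗ[R] M →ₗ[R] R) {v w : M} (hvw : B v w = 0)
    (hwv : B w v = 0) (hw : 0 ≤ B w w) {s : R} (hs : s ^ 2 ≤ 1) :
    B (v + s • w) (v + s • w) ≤ B (v + w) (v + w) :=
  calc B (v + s • w) (v + s • w) = B v v + s ^ 2 * B w w := bilin_apply_add_smul_self B hvw hwv s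
    _ ≤ B v v + 1 * B w w := by gcongr
    _ = B (v + w) (v + w) := by
      rw [← one_pow 2, ← bilin_apply_add_smul_self B hvw hwv, one_smul]

theorem injOn_of_bilin_apply_self_neg {N : Type*} [CommRing R] [Preorder R] [AddCommGroup M]
    [Module R M] [AddCommGroup N] [Module R N] (B : N →ₗ[R] N →ₗ[R] R) {f : M →ₗ[R] N}
    {V : Submodule R M} (h : ∀ v ∈ V, v ≠ 0 → B (f v) (f v) < 0) : Set.InjOn f V := by
  refine LinearMap.injOn_of_disjoint_ker subset_rfl
    (LinearMap.disjoint_ker.2 fun v hv hfv ↦ by_contra fun hne ↦ (h v hv hne).ne ?_)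
  rw [hfv, map_zero]

end BilinearForm

section Submodule

variable {R M : Type*} [Ring R] [AddCommGroup M] [Module R M]

theorem apply_mem_and_sub_apply_mem_of_mem_sup {π : M →ₗ[R] M} {p q : Submodule R M}
    (hp : ∀ v ∈ p, π v = v) (hq : ∀ v ∈ q, π v = 0) {e : M} (he : e ∈ p ⊔ q) :
    π e ∈ p ∧ e - π e ∈ q := by
  obtain ⟨v, hv, w, hw, rfl⟩ := Submodule.mem_sup.1 he
  have hπ : π (v + w) = v := by rw [map_add, hp v hv, hq w hw, add_zero]
  rw [hπ, add_sub_cancel_left]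
  exact ⟨hv, hw⟩

theorem submodule_map_eq_of_injOn_of_finrank_le {K V W : Type*} [DivisionRing K] [AddCommGroup V]
    [Module K V] [AddCommGroup W] [Module K W] {f : V →ₗ[K] W} {p : Submodule K V}
    {q : Submodule K W} [FiniteDimensional K q] (hf : Set.InjOn f p) (hle : p.map f ≤ q)
    (hrank : finrank K q ≤ finrank K p) : p.map f = q := by
  refine Submodule.eq_of_le_of_finrank_le hle (hrank.trans_eq ?_)
  rw [← LinearMap.range_domRestrict,
    LinearMap.finrank_range_of_inj (f := f.domRestrict p) hf.injective]

end Submodule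

section ComplexBilinear

variable {E : Type*} [AddCommGroup E] [Module ℂ E] {ω : E →ₗ[ℂ] E →ₗ[ℂ] ℂ} {V : Submodule ℝ E}

/-- The real bilinear form `Re ω`, so that real bilinear algebra applies to it. -/
noncomputable def reForm (ω : E →ₗ[ℂ] E →ₗ[ℂ] ℂ) : LinearMap.BilinForm ℝ E :=
  (ω.restrictScalars₁₂ ℝ ℝ).compr₂ Complex.reLm

/-- The real bilinear form `Im ω`, so that real bilinear algebra applies to it. -/
noncomputable def imForm (ω : E →ₗ[ℂ] E →ₗ[ℂ] ℂ) : LinearMap.BilinForm ℝ E :=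
  (ω.restrictScalars₁₂ ℝ ℝ).compr₂ Complex.imLm

theorem apply_mulI_right (ω : E →ₗ[ℂ] E →ₗ[ℂ] ℂ) (v w : E) : ω v (mulI E w) = I * ω v w :=
  map_smul (ω v) I w

theorem apply_mulI_left (ω : E →ₗ[ℂ] E →ₗ[ℂ] ℂ) (v w : E) : ω (mulI E v) w = I * ω v w :=
  ω.map_smul₂ I v w

theorem apply_mulI_mulI (ω : E →ₗ[ℂ] E →ₗ[ℂ] ℂ) (v w : E) :
    ω (mulI E v) (mulI E w) = -ω v w := by
  rw [apply_mulI_left, apply_mulI_right, ← mul_assoc, I_mul_I, neg_one_mul]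

theorem ImIsotropic.map_mulI (hV : ImIsotropic ω V) : ImIsotropic ω (V.map (mulI E)) := by
  rintro _ ⟨v, hv, rfl⟩ _ ⟨w, hw, rfl⟩
  rw [apply_mulI_mulI, neg_im, hV v hv w hw, neg_zero]

theorem ImIsotropic.re_apply_eq_zero_right (hV : ImIsotropic ω V) {v w : E} (hv : v ∈ V)
    (hw : w ∈ V.map (mulI E)) : (ω v w).re = 0 := by
  obtain ⟨w, hw, rfl⟩ := hw
  rw [apply_mulI_right, I_mul_re, hV v hv w hw, neg_zero]

theorem ImIsotropic.re_apply_eq_zero_left (hV : ImIsotropic ω V) {v w : E}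
    (hv : v ∈ V.map (mulI E)) (hw : w ∈ V) : (ω v w).re = 0 := by
  obtain ⟨v, hv, rfl⟩ := hv
  rw [apply_mulI_left, I_mul_re, hV v hv w hw, neg_zero]

theorem re_apply_self_nonneg_of_mem_map_mulI (hV : ∀ v ∈ V, (ω v v).re ≤ 0) {w : E}
    (hw : w ∈ V.map (mulI E)) : 0 ≤ (ω w w).re := by
  obtain ⟨v, hv, rfl⟩ := hw
  rw [apply_mulI_mulI, neg_re]
  exact neg_nonneg.2 (hV v hv)

theorem ReNegDef.re_apply_self_nonpos (hV : ReNegDef ω V) : ∀ v ∈ V, (ω v v).re ≤ 0 := by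
  intro v hv
  obtain rfl | hne := eq_or_ne v 0
  · rw [map_zero, zero_re]
  · exact (hV v hv hne).le

end ComplexBilinear

section Interpolation

theorem lineMap_id_apply {R M : Type*} [CommRing R] [AddCommGroup M] [Module R M]
    (π : M →ₗ[R] M) (t : R) (e : M) :
    AffineMap.lineMap LinearMap.id π t e = π e + (1 - t) • (e - π e) := by
  rw [AffineMap.lineMap_apply_module]
  simp only [LinearMap.add_apply, LinearMap.smul_apply, LinearMap.id_apply]
  module

variable {E : Type*} [AddCommGroup E] [Module ℂ E] {ω : E →ₗ[ℂ] E →ₗ[ℂ] ℂ}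
  {E₀ E₁ : Submodule ℝ E} {π : E →ₗ[ℝ] E}

theorem ImIsotropic.map_lineMap (h₀ : ImIsotropic ω E₀) (h₁ : ImIsotropic ω E₁)
    (hπ : ∀ e ∈ E₀, π e ∈ E₁ ∧ e - π e ∈ E₁.map (mulI E)) (t : ℝ) :
    ImIsotropic ω (E₀.map (AffineMap.lineMap LinearMap.id π t)) := by
  rintro _ ⟨e, he, rfl⟩ _ ⟨e', he', rfl⟩
  obtain ⟨hv, hw⟩ := hπ e he
  obtain ⟨hv', hw'⟩ := hπ e' he'
  have hscale := bilin_apply_add_smul_add_smul (imForm ω) (h₁ _ hv _ hv')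
    (h₁.map_mulI _ hw _ hw') (1 - t)
  rw [← lineMap_id_apply, ← lineMap_id_apply, add_sub_cancel, add_sub_cancel] at hscale
  exact hscale.trans (mul_eq_zero_of_right _ (h₀ e he e' he'))

theorem re_lineMap_self_le (h₁ : ImIsotropic ω E₁) (h₁nonpos : ∀ v ∈ E₁, (ω v v).re ≤ 0)
    {e : E} (hv : π e ∈ E₁) (hw : e - π e ∈ E₁.map (mulI E)) {t : ℝ}
    (ht : t ∈ Set.Icc (0 : ℝ) 2) :
    (ω (AffineMap.lineMap LinearMap.id π t e) (AffineMap.lineMap LinearMap.id π t e)).re ≤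
      (ω e e).re := by
  have hs : (1 - t) ^ 2 ≤ 1 := by nlinarith [ht.1, ht.2]
  have hle := bilin_apply_add_smul_self_le (reForm ω) (h₁.re_apply_eq_zero_right hv hw)
    (h₁.re_apply_eq_zero_left hw hv) (re_apply_self_nonneg_of_mem_map_mulI h₁nonpos hw) hs
  rw [← lineMap_id_apply, add_sub_cancel] at hle
  exact hle

theorem ReNegDef.re_lineMap_self_neg (h₀ : ReNegDef ω E₀) (h₁ : ImIsotropic ω E₁)
    (h₁nonpos : ∀ v ∈ E₁, (ω v v).re ≤ 0)
    (hπ : ∀ e ∈ E₀, π e ∈ E₁ ∧ e - π e ∈ E₁.map (mulI E)) {t : ℝ}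
    (ht : t ∈ Set.Icc (0 : ℝ) 2) {e : E} (he : e ∈ E₀) (hne : e ≠ 0) :
    (ω (AffineMap.lineMap LinearMap.id π t e) (AffineMap.lineMap LinearMap.id π t e)).re < 0 :=
  (re_lineMap_self_le h₁ h₁nonpos (hπ e he).1 (hπ e he).2 ht).trans_lt (h₀ e he hne)

theorem ReNegDef.injOn_lineMap (h₀ : ReNegDef ω E₀) (h₁ : ImIsotropic ω E₁)
    (h₁nonpos : ∀ v ∈ E₁, (ω v v).re ≤ 0)
    (hπ : ∀ e ∈ E₀, π e ∈ E₁ ∧ e - π e ∈ E₁.map (mulI E)) {t : ℝ}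
    (ht : t ∈ Set.Icc (0 : ℝ) 2) :
    Set.InjOn (AffineMap.lineMap LinearMap.id π t : E →ₗ[ℝ] E) E₀ :=
  injOn_of_bilin_apply_self_neg (reForm ω) fun _ he hne ↦
    h₀.re_lineMap_self_neg h₁ h₁nonpos hπ ht he hne

theorem ReNegDef.map_lineMap (h₀ : ReNegDef ω E₀) (h₁ : ImIsotropic ω E₁)
    (h₁nonpos : ∀ v ∈ E₁, (ω v v).re ≤ 0)
    (hπ : ∀ e ∈ E₀, π e ∈ E₁ ∧ e - π e ∈ E₁.map (mulI E)) {t : ℝ}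
    (ht : t ∈ Set.Icc (0 : ℝ) 2) :
    ReNegDef ω (E₀.map (AffineMap.lineMap LinearMap.id π t)) := by
  rintro _ ⟨e, he, rfl⟩ hne
  exact h₀.re_lineMap_self_neg h₁ h₁nonpos hπ ht he
    (ne_of_apply_ne _ (hne.trans_eq (map_zero _).symm))

theorem ReNegDef.map_eq_of_finrank_le (h₀ : ReNegDef ω E₀) (h₁ : ImIsotropic ω E₁)
    (h₁nonpos : ∀ v ∈ E₁, (ω v v).re ≤ 0)
    (hπ : ∀ e ∈ E₀, π e ∈ E₁ ∧ e - π e ∈ E₁.map (mulI E)) [FiniteDimensional ℝ E₁]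
    (hrank : finrank ℝ E₁ ≤ finrank ℝ E₀) : E₀.map π = E₁ := by
  have hinj : Set.InjOn π E₀ := by
    simpa only [AffineMap.lineMap_apply_one] using
      h₀.injOn_lineMap h₁ h₁nonpos hπ ⟨zero_le_one, one_le_two⟩
  exact submodule_map_eq_of_injOn_of_finrank_le hinj
    (Submodule.map_le_iff_le_comap.2 fun e he ↦ (hπ e he).1) hrank

end Interpolation

theorem stmt0_general {E : Type*} [AddCommGroup E] [Module ℂ E]
    (ω : E →ₗ[ℂ] E →ₗ[ℂ] ℂ) (E₀ E₁ : Submodule ℝ E)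
    (h₀iso : ImIsotropic ω E₀) (h₁iso : ImIsotropic ω E₁)
    (h₀neg : ReNegDef ω E₀) (h₁nonpos : ∀ v ∈ E₁, (ω v v).re ≤ 0)
    (hsup : E₀ ≤ E₁ ⊔ E₁.map (mulI E))
    (π : E →ₗ[ℝ] E)
    (hπ_id : ∀ v ∈ E₁, π v = v)
    (hπ_ker : ∀ v ∈ E₁.map (mulI E), π v = 0)
    (πt : ℝ → E →ₗ[ℝ] E)
    (hπt : ∀ (t : ℝ) (e : E), πt t e = e - t • (e - π e)) :
    (∀ t, ImIsotropic ω (E₀.map (πt t))) ∧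
    (∀ t ∈ Set.Icc (0 : ℝ) 2, Set.InjOn (πt t) (E₀ : Set E) ∧ ReNegDef ω (E₀.map (πt t))) ∧
    (∀ e, πt 0 e = e) ∧
    (FiniteDimensional ℝ E₁ → finrank ℝ E₁ ≤ finrank ℝ E₀ → E₀.map (πt 1) = E₁) := by
  have hline : ∀ t, πt t = AffineMap.lineMap LinearMap.id π t := fun t ↦ by
    ext e
    rw [hπt, lineMap_id_apply]
    module
  have hsplit : ∀ e ∈ E₀, π e ∈ E₁ ∧ e - π e ∈ E₁.map (mulI E) := fun e he ↦
    apply_mem_and_sub_apply_mem_of_mem_sup hπ_id hπ_ker (hsup he)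
  simp only [hline, AffineMap.lineMap_apply_zero, AffineMap.lineMap_apply_one]
  exact ⟨h₀iso.map_lineMap h₁iso hsplit,
    fun t ht ↦ ⟨h₀neg.injOn_lineMap h₁iso h₁nonpos hsplit ht,
      h₀neg.map_lineMap h₁iso h₁nonpos hsplit ht⟩,
    LinearMap.id_apply,
    fun _ hrank ↦ h₀neg.map_eq_of_finrank_le h₁iso h₁nonpos hsplit hrank⟩

/-- Fiberwise interpolation of negative-definite isotropic subspaces:
for `t ∈ [0,1]`, the map `π_t = id - t • (id - π)` is injective on `E₀`, its image is
`Im ω`-isotropic and `Re ω`-negative definite; `π_0` is the inclusion, and if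
`finrank ℝ E₀ = finrank ℝ E₁` then `π_1(E₀) = E₁`. -/
theorem stmt0 {E : Type*} [AddCommGroup E] [Module ℂ E] [FiniteDimensional ℂ E]
    (ω : E →ₗ[ℂ] E →ₗ[ℂ] ℂ) (hsym : ∀ v w : E, ω v w = ω w v)
    (E₀ E₁ : Submodule ℝ E)
    (h₀iso : ImIsotropic ω E₀) (h₁iso : ImIsotropic ω E₁)
    (h₀neg : ReNegDef ω E₀) (h₁neg : ReNegDef ω E₁)
    (hdisj : E₁ ⊓ E₁.map (mulI E) = ⊥) (hsup : E₁ ⊔ E₁.map (mulI E) = ⊤)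
    (π : E →ₗ[ℝ] E)
    (hπ_id : ∀ v ∈ E₁, π v = v)
    (hπ_ker : ∀ v ∈ E₁.map (mulI E), π v = 0)
    (hπ_range : ∀ v : E, π v ∈ E₁)
    (πt : ℝ → E →ₗ[ℝ] E)
    (hπt : ∀ (t : ℝ) (e : E), πt t e = e - t • (e - π e)) :
    (∀ t ∈ Set.Icc (0 : ℝ) 1,
        Set.InjOn (πt t) (E₀ : Set E) ∧
        ImIsotropic ω (E₀.map (πt t)) ∧
        ReNegDef ω (E₀.map (πt t))) ∧
    (∀ e ∈ E₀, πt 0 e = e) ∧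
    (finrank ℝ E₀ = finrank ℝ E₁ → E₀.map (πt 1) = E₁) := by
  have : FiniteDimensional ℝ E := FiniteDimensional.complexToReal E
  obtain ⟨hiso, hneg, hzero, hone⟩ := stmt0_general ω E₀ E₁ h₀iso h₁iso h₀neg
    h₁neg.re_apply_self_nonpos (hsup ▸ le_top) π hπ_id hπ_ker πt hπt
  have hsub : Set.Icc (0 : ℝ) 1 ⊆ Set.Icc 0 2 := Set.Icc_subset_Icc_right one_le_two
  exact ⟨fun t ht ↦ ⟨(hneg t (hsub ht)).1, hiso t, (hneg t (hsub ht)).2⟩, fun e _ ↦ hzero e,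
    fun hrank ↦ hone inferInstance hrank.ge⟩
end

section
/- Isotropy is preserved along the interpolating family: Let E be a complex vector space and ω a symmetric ℂ-bilinear form on E. Let E₁ be an Im ω-isotropic real subspace of E. If a, b, a', b' ∈ E₁ satisfy Im ω(a + i·b, a' + i·b') = 0, then Im ω(a + t·i·b, a' + t·i·b') = 0 for every t ∈ ℝ. -/
open Complex Module

/-!
The function `t ↦ Im ω(a + t i b, a' + t i b')` is a polynomial in `t` of degree at most two. Its
constant coefficient `Im ω(a, a')` and its quadratic coefficient `Im ω(i b, i b') = -Im ω(b, b')`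
both vanish, so it is linear in `t`, namely `t` times its value at `t = 1`.
-/

theorem bilin_add_smul_add_smul_of_apply_eq_zero {R M N P : Type*} [CommSemiring R]
    [AddCommMonoid M] [AddCommMonoid N] [AddCommMonoid P] [Module R M] [Module R N] [Module R P]
    (B : M →ₗ[R] N →ₗ[R] P) {x y : M} {x' y' : N} (hx : B x x' = 0) (hy : B y y' = 0) (t : R) :
    B (x + t • y) (x' + t • y') = t • B (x + y) (x' + y') := by
  simp only [map_add, map_smul, LinearMap.add_apply, LinearMap.smul_apply, hx, hy, zero_add,
    add_zero, smul_zero, smul_add]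

section ComplexPairing

variable {E F : Type*} [AddCommGroup E] [Module ℂ E] [AddCommGroup F] [Module ℂ F]

theorem bilin_I_smul_I_smul {G : Type*} [AddCommGroup G] [Module ℂ G]
    (ω : E →ₗ[ℂ] F →ₗ[ℂ] G) (v : E) (w : F) : ω (I • v) (I • w) = -ω v w := by
  rw [LinearMap.map_smul₂, map_smul, smul_smul, I_mul_I, neg_one_smul]

variable (ω : E →ₗ[ℂ] F →ₗ[ℂ] ℂ)

/-- The real bilinear pairing `Im ω` of a complex bilinear pairing `ω`, on the real vector spaces
obtained by restriction of scalars; it lets real bilinear algebra be applied to `Im ω`. -/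
noncomputable def imPairing : E →ₗ[ℝ] F →ₗ[ℝ] ℝ :=
  (ω.restrictScalars₁₂ ℝ ℝ).compr₂ imLm

theorem imPairing_apply (v : E) (w : F) : imPairing ω v w = (ω v w).im :=
  rfl

theorem imPairing_I_smul_I_smul (v : E) (w : F) :
    imPairing ω (I • v) (I • w) = -imPairing ω v w := by
  simp only [imPairing_apply, bilin_I_smul_I_smul, neg_im]

theorem stmt2_general {a b : E} {a' b' : F} (ha : (ω a a').im = 0) (hb : (ω b b').im = 0)
    (h : (ω (a + I • b) (a' + I • b')).im = 0) (t : ℝ) :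
    (ω (a + t • (I • b)) (a' + t • (I • b'))).im = 0 := by
  simp only [← imPairing_apply] at ha hb h ⊢
  have hIb : imPairing ω (I • b) (I • b') = 0 := by
    rw [imPairing_I_smul_I_smul, hb, neg_zero]
  rw [bilin_add_smul_add_smul_of_apply_eq_zero (imPairing ω) ha hIb, h, smul_zero]

end ComplexPairing

/-- Isotropy is preserved along the interpolating family. -/
theorem stmt2 {E : Type*} [AddCommGroup E] [Module ℂ E]
    (ω : E →ₗ[ℂ] E →ₗ[ℂ] ℂ) (hsym : ∀ v w : E, ω v w = ω w v)
    (E₁ : Submodule ℝ E)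
    (hiso : ImIsotropic ω E₁) :
    ∀ a ∈ E₁, ∀ b ∈ E₁, ∀ a' ∈ E₁, ∀ b' ∈ E₁,
      (ω (a + Complex.I • b) (a' + Complex.I • b')).im = 0 →
      ∀ t : ℝ,
        (ω (a + t • (Complex.I • b)) (a' + t • (Complex.I • b'))).im = 0 :=
  fun a ha b hb a' ha' b' hb' h t =>
    stmt2_general ω (hiso a ha a' ha') (hiso b hb b' hb') h t
end

section
/- Real splitting of a complex vector space by a half-dimensional negative-definite real subspace (the splitting E = E₁ ⊕ i·E₁ used throughout the paper's interpolation arguments): Let E be a finite-dimensional complex vector space and ω a symmetric ℂ-bilinear form on E. Let E₁ be a real subspace of E with finrank_ℝ E₁ = finrank_ℂ E, and suppose Re ω is negative definite on E₁. Then E is the internal direct sum of E₁ and i·E₁ as real vector spaces: E₁ ∩ (i·E₁) = {0} and E₁ + i·E₁ = E. -/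
open Complex Module

section

variable {E : Type*} [AddCommGroup E] [Module ℂ E]

theorem mulI_apply (v : E) : mulI E v = I • v := rfl

theorem mulI_injective : Function.Injective (mulI E) :=
  smul_right_injective E I_ne_zero

theorem finrank_map_mulI (V : Submodule ℝ E) :
    finrank ℝ (V.map (mulI E)) = finrank ℝ V :=
  (V.equivMapOfInjective (mulI E) mulI_injective).finrank_eq.symm

theorem bilin_mulI_mulI {E' F : Type*} [AddCommGroup E'] [Module ℂ E'] [AddCommGroup F]
    [Module ℂ F] (ω : E →ₗ[ℂ] E' →ₗ[ℂ] F) (v : E) (w : E') :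
    ω (mulI E v) (mulI E' w) = -ω v w := by
  simp only [mulI_apply, map_smul, LinearMap.smul_apply, smul_smul, I_mul_I, neg_one_smul]

theorem ReNegDef.re_pos_of_mem_map_mulI {ω : E →ₗ[ℂ] E →ₗ[ℂ] ℂ} {V : Submodule ℝ E}
    (hneg : ReNegDef ω V) {x : E} (hx : x ∈ V.map (mulI E)) (hx0 : x ≠ 0) :
    0 < (ω x x).re := by
  obtain ⟨v, hv, rfl⟩ := hx
  have hv0 : v ≠ 0 := ne_zero_of_map hx0
  rw [bilin_mulI_mulI, neg_re]
  exact neg_pos.mpr (hneg v hv hv0)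

theorem ReNegDef.disjoint_map_mulI {ω : E →ₗ[ℂ] E →ₗ[ℂ] ℂ} {V : Submodule ℝ E}
    (hneg : ReNegDef ω V) : Disjoint V (V.map (mulI E)) := by
  rw [Submodule.disjoint_def]
  intro x hx hix
  by_contra hx0
  exact lt_asymm (hneg x hx hx0) (hneg.re_pos_of_mem_map_mulI hix hx0)

theorem isCompl_map_mulI_of_disjoint [FiniteDimensional ℂ E] {V : Submodule ℝ E}
    (hdisj : Disjoint V (V.map (mulI E))) (hrank : finrank ℂ E ≤ finrank ℝ V) :
    IsCompl V (V.map (mulI E)) := by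
  have : FiniteDimensional ℝ E := FiniteDimensional.complexToReal E
  have hdim : finrank ℝ E ≤ finrank ℝ V + finrank ℝ (V.map (mulI E)) := by
    rw [finrank_real_of_complex, finrank_map_mulI]
    lia
  exact (Submodule.isCompl_iff_disjoint V (V.map (mulI E)) hdim).mpr hdisj

theorem stmt5_general [FiniteDimensional ℂ E] (ω : E →ₗ[ℂ] E →ₗ[ℂ] ℂ) (E₁ : Submodule ℝ E)
    (hrank : finrank ℂ E ≤ finrank ℝ E₁) (hneg : ReNegDef ω E₁) :
    IsCompl E₁ (E₁.map (mulI E)) :=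
  isCompl_map_mulI_of_disjoint hneg.disjoint_map_mulI hrank

end

/-- Real splitting of a complex vector space by a half-dimensional negative-definite
real subspace: `E = E₁ ⊕ i·E₁`. -/
theorem stmt5 {E : Type*} [AddCommGroup E] [Module ℂ E] [FiniteDimensional ℂ E]
    (ω : E →ₗ[ℂ] E →ₗ[ℂ] ℂ) (hsym : ∀ v w : E, ω v w = ω w v)
    (E₁ : Submodule ℝ E)
    (hrank : finrank ℝ E₁ = finrank ℂ E)
    (hneg : ReNegDef ω E₁) :
    E₁ ⊓ E₁.map (mulI E) = ⊥ ∧ E₁ ⊔ E₁.map (mulI E) = ⊤ := by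
  have hcompl := stmt5_general ω E₁ hrank.ge hneg
  exact ⟨hcompl.inf_eq_bot, hcompl.sup_eq_top⟩
end

section
/- Gluing of negative-definite isotropic half-dimensional families over a topological base (a continuous, trivial-bundle rendering of the paper's Proposition on gluing strictly negative maximally isotropic sub-bundles): Let E be a finite-dimensional complex vector space, ω a nondegenerate symmetric ℂ-bilinear form on E, and n = finrank_ℂ E. Let F be a real vector space with finrank_ℝ F = n. Let M be a normal topological space, U ⊆ M open, and V ⊆ U closed in M. Suppose ψ₀ : U → Hom_ℝ(F, E) and ψ₁ : M → Hom_ℝ(F, E) are continuous maps (Hom_ℝ(F, E) carrying its standard topology as a finite-dimensional real vector space) such that ψ₀(x) is injective with Im ω-isotropic range on which Re ω is negative definite for every x ∈ U, and ψ₁(x) is injective with Im ω-isotropic range on which Re ω is negative definite for every x ∈ M. Then there is a function L assigning to each x ∈ M a real subspace L(x) of E such that: (a) for every x ∈ M, L(x) is Im ω-isotropic, Re ω is negative definite on L(x), and finrank_ℝ L(x) = n; (b) L(x) = range ψ₁(x) for all x ∈ M ∖ U; (c) L(x) = range ψ₀(x) for all x ∈ V; (d) every point of M has an open neighborhood O and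 a continuous map χ : O → Hom_ℝ(F, E) with χ(x) injective and range χ(x) = L(x) for all x ∈ O. -/
open Complex Module

/-!
Since `Re ω` is negative definite on `range ψ` and on `range φ`, each of the two meets `I` times the
other only in `0`. Counting dimensions, `E = range ψ ⊕ I • range ψ`, and `range φ` is the graph
`{ψ a + I • ψ (A a)}` for an `A : F → F` depending continuously on `ψ` and `φ`. Replacing `A` by
`t • A` multiplies `Im ω` on the graph by `t`, hence keeps it zero, while `Re ω (v, v)` becomes
`ω (ψ a, ψ a) - t² ω (ψ (A a), ψ (A a))`, which for `|t| ≤ 1` is at most its value at `t = 1`.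
Multiplying the `A` of `range (ψ₀ x)` over `range (ψ₁ x)` by a Urysohn function supported in `U` and
equal to `1` on `V` therefore interpolates between the two families, with a continuous frame on all
of `M`.
-/

section Topology

open Set

variable {X : Type*} [TopologicalSpace X]

theorem exists_tsupport_subset_eqOn_one [NormalSpace X] {s t : Set X} (hs : IsOpen s)
    (ht : IsClosed t) (hts : t ⊆ s) :
    ∃ f : C(X, ℝ), tsupport f ⊆ s ∧ EqOn f 1 t ∧ ∀ x, f x ∈ Icc (0 : ℝ) 1 := by
  obtain ⟨w, hw, htw, hws⟩ := normal_exists_closure_subset ht hs hts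
  obtain ⟨f, hf0, hf1, hf⟩ := exists_continuous_zero_one_of_isClosed hw.isClosed_compl ht
    (disjoint_compl_left_iff_subset.2 htw)
  have hsupp : Function.support f ⊆ w := fun x hx => by_contra fun hxw => hx (hf0 hxw)
  exact ⟨f, (closure_mono hsupp).trans hws, hf1, hf⟩

theorem continuous_smul_extend_zero {R Y : Type*} [TopologicalSpace R] [Zero R]
    [TopologicalSpace Y] [Zero Y] [SMulWithZero R Y] [ContinuousSMul R Y] {s : Set X}
    (hs : IsOpen s) {ρ : X → R} (hρ : Continuous ρ) (hρs : tsupport ρ ⊆ s) {f : s → Y}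
    (hf : Continuous f) :
    Continuous fun x => ρ x • Function.extend Subtype.val f 0 x := by
  refine continuous_of_tsupport fun x hx => hρ.continuousAt.smul ?_
  have hxs : x ∈ s := hρs (tsupport_smul_subset_left ρ _ hx)
  have hcomp : Function.extend Subtype.val f 0 ∘ Subtype.val = f :=
    Function.extend_comp Subtype.val_injective f 0
  refine (hs.isOpenEmbedding_subtypeVal.continuousAt_iff (x := ⟨x, hxs⟩)).1 ?_
  rw [hcomp]
  exact hf.continuousAt

end Topology

section Invertible

variable {𝕜 V W : Type*} [NontriviallyNormedField 𝕜] [NormedAddCommGroup V] [NormedSpace 𝕜 V]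
  [NormedAddCommGroup W] [NormedSpace 𝕜 W]

theorem isInvertible_of_injective_of_finrank_eq [CompleteSpace 𝕜] [FiniteDimensional 𝕜 V]
    [FiniteDimensional 𝕜 W] {f : V →L[𝕜] W} (hf : Function.Injective f)
    (h : finrank 𝕜 V = finrank 𝕜 W) :
    f.IsInvertible :=
  ⟨(LinearEquiv.ofInjectiveOfFinrankEq (f : V →ₗ[𝕜] W) hf h).toContinuousLinearEquiv,
    ContinuousLinearMap.ext fun _ => rfl⟩

theorem continuous_inverse_of_isInvertible [CompleteSpace V] {X : Type*} [TopologicalSpace X]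
    {f : X → V →L[𝕜] W} (hf : Continuous f) (h : ∀ x, (f x).IsInvertible) :
    Continuous fun x => (f x).inverse :=
  continuous_iff_continuousAt.2 fun x =>
    ((h x).contDiffAt_map_inverse (n := 0)).continuousAt.comp hf.continuousAt

end Invertible

namespace ReNegDef

variable {E : Type*} [AddCommGroup E] [Module ℂ E] {ω : E →ₗ[ℂ] E →ₗ[ℂ] ℂ}
  {V W : Submodule ℝ E}

theorem re_apply_self_nonpos_s10 (hV : ReNegDef ω V) {v : E} (hv : v ∈ V) : (ω v v).re ≤ 0 := by
  obtain rfl | hv0 := eq_or_ne v 0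
  · simp
  · exact (hV v hv hv0).le

theorem eq_zero_of_eq_I_smul (hV : ReNegDef ω V) (hW : ReNegDef ω W) {v w : E} (hv : v ∈ V)
    (hw : w ∈ W) (h : v = I • w) : v = 0 := by
  have hvw : ω v v = -ω w w := by
    simp [h, ← mul_assoc]
  by_contra hv0
  have hneg := hV v hv hv0
  rw [hvw, neg_re] at hneg
  linarith [hW.re_apply_self_nonpos_s10 hw]

end ReNegDef

section Frame

variable {E F : Type*} [NormedAddCommGroup E] [NormedSpace ℂ E]
  [NormedAddCommGroup F] [NormedSpace ℝ F]

/-- The complexification `(a, b) ↦ ψ a + I • ψ b` of a real-linear map into a complex space, with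
`F × F` in the role of `F ⊗ ℂ`. It serves to split vectors of `E` along `range ψ` and
`I • range ψ`. -/
noncomputable def complexification (ψ : F →L[ℝ] E) : F × F →L[ℝ] E :=
  ψ.coprod (I • ψ)

/-- The real-linear map `a ↦ ψ a + I • ψ (A a)`, which parametrizes the graph over `range ψ` of the
map into `I • range ψ` that `A` represents. -/
noncomputable def graphMap (ψ : F →L[ℝ] E) (A : F →L[ℝ] F) : F →L[ℝ] E :=
  ψ + I • ψ ∘L A

/-- The components `(P, Q)` of `φ = ψ ∘ P + I • ψ ∘ Q`, as a single map `F → F × F`; zero if the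
complexification of `ψ` is not invertible. -/
noncomputable def components (ψ φ : F →L[ℝ] E) : F →L[ℝ] F × F :=
  (complexification ψ).inverse ∘L φ

/-- The map `Q ∘ P⁻¹`, where `(P, Q)` are the components of `φ` along `ψ`: it presents `range φ` as
a graph over `range ψ`. As `ContinuousLinearMap.inverse` is used, it is zero if `P` is not
invertible. -/
noncomputable def graphSlope (ψ φ : F →L[ℝ] E) : F →L[ℝ] F :=
  (ContinuousLinearMap.snd ℝ F F ∘L components ψ φ) ∘L
    (ContinuousLinearMap.fst ℝ F F ∘L components ψ φ).inverse

/-- `ψ` parametrizes an `Im ω`-isotropic real subspace on which `Re ω` is negative definite: the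
condition imposed on the fibres of the families to be glued. -/
def IsNegIsotropicFrame (ω : E →ₗ[ℂ] E →ₗ[ℂ] ℂ) (ψ : F →L[ℝ] E) : Prop :=
  Function.Injective ψ ∧ ImIsotropic ω (LinearMap.range (ψ : F →ₗ[ℝ] E)) ∧
    ReNegDef ω (LinearMap.range (ψ : F →ₗ[ℝ] E))

theorem complexification_apply (ψ : F →L[ℝ] E) (p : F × F) :
    complexification ψ p = ψ p.1 + I • ψ p.2 :=
  rfl

theorem continuous_complexification :
    Continuous (complexification : (F →L[ℝ] E) → F × F →L[ℝ] E) :=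
  (ContinuousLinearMap.coprodEquivL ℝ).continuous.comp
    (continuous_id.prodMk (continuous_id.const_smul I))

theorem graphMap_apply (ψ : F →L[ℝ] E) (A : F →L[ℝ] F) (a : F) :
    graphMap ψ A a = ψ a + I • ψ (A a) :=
  rfl

theorem graphMap_zero (ψ : F →L[ℝ] E) : graphMap ψ 0 = ψ := by
  simp [graphMap]

theorem continuous_graphMap {X : Type*} [TopologicalSpace X] {ψ : X → F →L[ℝ] E}
    {A : X → F →L[ℝ] F} (hψ : Continuous ψ) (hA : Continuous A) :
    Continuous fun x => graphMap (ψ x) (A x) :=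
  hψ.add ((hψ.clm_comp hA).const_smul I)

namespace ImIsotropic

variable {ω : E →ₗ[ℂ] E →ₗ[ℂ] ℂ} {ψ : F →L[ℝ] E}

theorem im_apply_range (h : ImIsotropic ω (LinearMap.range (ψ : F →ₗ[ℝ] E))) (a b : F) :
    (ω (ψ a) (ψ b)).im = 0 :=
  h _ ⟨a, rfl⟩ _ ⟨b, rfl⟩

theorem re_apply_graphMap (h : ImIsotropic ω (LinearMap.range (ψ : F →ₗ[ℝ] E)))
    (A : F →L[ℝ] F) (a b : F) :
    (ω (graphMap ψ A a) (graphMap ψ A b)).re =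
      (ω (ψ a) (ψ b)).re - (ω (ψ (A a)) (ψ (A b))).re := by
  simp [graphMap_apply, h.im_apply_range, sub_eq_add_neg]

theorem im_apply_graphMap (h : ImIsotropic ω (LinearMap.range (ψ : F →ₗ[ℝ] E)))
    (A : F →L[ℝ] F) (a b : F) :
    (ω (graphMap ψ A a) (graphMap ψ A b)).im =
      (ω (ψ a) (ψ (A b))).re + (ω (ψ (A a)) (ψ b)).re := by
  simp [graphMap_apply, h.im_apply_range, add_comm]

end ImIsotropic

namespace IsNegIsotropicFrame

variable {ω : E →ₗ[ℂ] E →ₗ[ℂ] ℂ} {ψ φ : F →L[ℝ] E}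

theorem re_apply_self_neg (h : IsNegIsotropicFrame ω ψ) {a : F} (ha : a ≠ 0) :
    (ω (ψ a) (ψ a)).re < 0 :=
  h.2.2 _ ⟨a, rfl⟩ ((map_ne_zero_iff ψ h.1).2 ha)

theorem of_apply (him : ∀ a b, (ω (ψ a) (ψ b)).im = 0)
    (hre : ∀ a, a ≠ 0 → (ω (ψ a) (ψ a)).re < 0) : IsNegIsotropicFrame ω ψ := by
  refine ⟨(injective_iff_map_eq_zero ψ).2 fun a ha => ?_, ?_, ?_⟩
  · by_contra ha0
    simpa [ha] using hre a ha0
  · rintro _ ⟨a, rfl⟩ _ ⟨b, rfl⟩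
    exact him a b
  · rintro _ ⟨a, rfl⟩ ha
    exact hre a fun ha0 => ha (by simp [ha0])

theorem injective_complexification (h : IsNegIsotropicFrame ω ψ) :
    Function.Injective (complexification ψ) := by
  refine (injective_iff_map_eq_zero _).2 fun ⟨a, b⟩ hab => ?_
  rw [complexification_apply] at hab
  have hψa : ψ a = 0 := h.2.2.eq_zero_of_eq_I_smul h.2.2 ⟨a, rfl⟩ ⟨-b, rfl⟩ <| by
    simpa using eq_neg_of_add_eq_zero_left hab
  have hψb : ψ b = 0 := by
    simpa [hψa] using hab
  rw [(map_eq_zero_iff ψ h.1).1 hψa, (map_eq_zero_iff ψ h.1).1 hψb, Prod.mk_zero_zero]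

theorem isNegIsotropicFrame_graphMap_smul {A : F →L[ℝ] F} (hψ : IsNegIsotropicFrame ω ψ)
    (h : IsNegIsotropicFrame ω (graphMap ψ A)) {t : ℝ} (ht : |t| ≤ 1) :
    IsNegIsotropicFrame ω (graphMap ψ (t • A)) := by
  refine of_apply (fun a b => ?_) fun a ha => ?_
  · calc (ω (graphMap ψ (t • A) a) (graphMap ψ (t • A) b)).im
        = t * (ω (graphMap ψ A a) (graphMap ψ A b)).im := by
          simp [hψ.2.1.im_apply_graphMap, mul_add]
      _ = 0 := by rw [h.2.1.im_apply_range, mul_zero]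
  · have ht2 : t ^ 2 ≤ 1 := (sq_le_one_iff_abs_le_one t).2 ht
    have hAa : (ω (ψ (A a)) (ψ (A a))).re ≤ 0 := hψ.2.2.re_apply_self_nonpos_s10 ⟨A a, rfl⟩
    calc (ω (graphMap ψ (t • A) a) (graphMap ψ (t • A) a)).re
        = (ω (ψ a) (ψ a)).re - t ^ 2 * (ω (ψ (A a)) (ψ (A a))).re := by
          simp [hψ.2.1.re_apply_graphMap, pow_two, mul_assoc]
      _ ≤ (ω (ψ a) (ψ a)).re - (ω (ψ (A a)) (ψ (A a))).re := by
          linarith [mul_le_mul_of_nonpos_right ht2 hAa]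
      _ = (ω (graphMap ψ A a) (graphMap ψ A a)).re := (hψ.2.1.re_apply_graphMap A a a).symm
      _ < 0 := h.re_apply_self_neg ha

theorem comp_of_injective (h : IsNegIsotropicFrame ω φ) {B : F →L[ℝ] F}
    (hB : Function.Injective B) : IsNegIsotropicFrame ω (φ ∘L B) :=
  of_apply (fun a b => h.2.1.im_apply_range (B a) (B b))
    fun _ ha => h.re_apply_self_neg ((map_ne_zero_iff B hB).2 ha)

section FiniteDimensional

variable [FiniteDimensional ℂ E] [FiniteDimensional ℝ F]

theorem isInvertible_complexification (hF : finrank ℝ F = finrank ℂ E)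
    (h : IsNegIsotropicFrame ω ψ) : (complexification ψ).IsInvertible := by
  have : FiniteDimensional ℝ E := FiniteDimensional.complexToReal E
  refine isInvertible_of_injective_of_finrank_eq h.injective_complexification ?_
  rw [finrank_prod, finrank_real_of_complex, hF, two_mul]

theorem apply_components (hF : finrank ℝ F = finrank ℂ E) (h : IsNegIsotropicFrame ω ψ)
    (φ : F →L[ℝ] E) (a : F) :
    ψ (components ψ φ a).1 + I • ψ (components ψ φ a).2 = φ a :=
  (h.isInvertible_complexification hF).self_apply_inverse (φ a)

theorem isInvertible_fst_components (hF : finrank ℝ F = finrank ℂ E)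
    (hψ : IsNegIsotropicFrame ω ψ) (hφ : IsNegIsotropicFrame ω φ) :
    (ContinuousLinearMap.fst ℝ F F ∘L components ψ φ).IsInvertible := by
  refine isInvertible_of_injective_of_finrank_eq
    ((injective_iff_map_eq_zero _).2 fun a ha => ?_) rfl
  have hfst : (components ψ φ a).1 = 0 := ha
  have hφa : φ a = I • ψ (components ψ φ a).2 := by
    rw [← hψ.apply_components hF φ a, hfst, map_zero, zero_add]
  exact (map_eq_zero_iff φ hφ.1).1 <| hφ.2.2.eq_zero_of_eq_I_smul hψ.2.2 ⟨a, rfl⟩ ⟨_, rfl⟩ hφa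

theorem graphMap_graphSlope (hF : finrank ℝ F = finrank ℂ E) (hψ : IsNegIsotropicFrame ω ψ)
    (hφ : IsNegIsotropicFrame ω φ) :
    graphMap ψ (graphSlope ψ φ) =
      φ ∘L (ContinuousLinearMap.fst ℝ F F ∘L components ψ φ).inverse := by
  ext a
  let b := (ContinuousLinearMap.fst ℝ F F ∘L components ψ φ).inverse a
  have hb : (components ψ φ b).1 = a :=
    (hψ.isInvertible_fst_components hF hφ).self_apply_inverse a
  calc graphMap ψ (graphSlope ψ φ) a = ψ a + I • ψ (components ψ φ b).2 := rfl
    _ = ψ (components ψ φ b).1 + I • ψ (components ψ φ b).2 := by rw [hb]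
    _ = φ b := hψ.apply_components hF φ b

theorem isNegIsotropicFrame_graphMap_graphSlope (hF : finrank ℝ F = finrank ℂ E)
    (hψ : IsNegIsotropicFrame ω ψ) (hφ : IsNegIsotropicFrame ω φ) :
    IsNegIsotropicFrame ω (graphMap ψ (graphSlope ψ φ)) := by
  rw [hψ.graphMap_graphSlope hF hφ]
  exact hφ.comp_of_injective (hψ.isInvertible_fst_components hF hφ).inverse.injective

theorem range_graphMap_graphSlope (hF : finrank ℝ F = finrank ℂ E)
    (hψ : IsNegIsotropicFrame ω ψ) (hφ : IsNegIsotropicFrame ω φ) :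
    LinearMap.range (graphMap ψ (graphSlope ψ φ) : F →ₗ[ℝ] E) =
      LinearMap.range (φ : F →ₗ[ℝ] E) := by
  rw [hψ.graphMap_graphSlope hF hφ]
  exact LinearMap.range_comp_of_range_eq_top _ (LinearMap.range_eq_top.2
    (hψ.isInvertible_fst_components hF hφ).inverse.surjective)

theorem continuous_graphSlope (hF : finrank ℝ F = finrank ℂ E) {X : Type*} [TopologicalSpace X]
    {ψ φ : X → F →L[ℝ] E} (hψc : Continuous ψ) (hφc : Continuous φ)
    (hψ : ∀ x, IsNegIsotropicFrame ω (ψ x)) (hφ : ∀ x, IsNegIsotropicFrame ω (φ x)) :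
    Continuous fun x => graphSlope (ψ x) (φ x) := by
  have : CompleteSpace F := FiniteDimensional.complete ℝ F
  have hcomp : Continuous fun x => components (ψ x) (φ x) :=
    (continuous_inverse_of_isInvertible (continuous_complexification.comp hψc)
      fun x => (hψ x).isInvertible_complexification hF).clm_comp hφc
  exact (continuous_const.clm_comp hcomp).clm_comp <|
    continuous_inverse_of_isInvertible (continuous_const.clm_comp hcomp)
      fun x => (hψ x).isInvertible_fst_components hF (hφ x)

end FiniteDimensional

end IsNegIsotropicFrame

end Frame

theorem stmt10_general {E : Type*} [NormedAddCommGroup E] [NormedSpace ℂ E]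
    [FiniteDimensional ℂ E] (ω : E →ₗ[ℂ] E →ₗ[ℂ] ℂ)
    {F : Type*} [NormedAddCommGroup F] [NormedSpace ℝ F] [FiniteDimensional ℝ F]
    (hF : finrank ℝ F = finrank ℂ E)
    {M : Type*} [TopologicalSpace M] [NormalSpace M]
    {U V : Set M} (hU : IsOpen U) (hVU : V ⊆ U) (hV : IsClosed V)
    {ψ₀ : U → (F →L[ℝ] E)} (hψ₀c : Continuous ψ₀)
    {ψ₁ : M → (F →L[ℝ] E)} (hψ₁c : Continuous ψ₁)
    (hψ₀ : ∀ x, IsNegIsotropicFrame ω (ψ₀ x)) (hψ₁ : ∀ x, IsNegIsotropicFrame ω (ψ₁ x)) :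
    ∃ χ : M → (F →L[ℝ] E), Continuous χ ∧ (∀ x, IsNegIsotropicFrame ω (χ x)) ∧
      (∀ x ∉ U, χ x = ψ₁ x) ∧
      ∀ x (hx : x ∈ V), LinearMap.range (χ x : F →ₗ[ℝ] E) =
        LinearMap.range (ψ₀ ⟨x, hVU hx⟩ : F →ₗ[ℝ] E) := by
  obtain ⟨ρ, hρU, hρV, hρ⟩ := exists_tsupport_subset_eqOn_one hU hV hVU
  let A : U → (F →L[ℝ] F) := fun x => graphSlope (ψ₁ x) (ψ₀ x)
  have hA : Continuous A := IsNegIsotropicFrame.continuous_graphSlope hF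
    (hψ₁c.comp continuous_subtype_val) hψ₀c (fun x => hψ₁ x) hψ₀
  let χ : M → (F →L[ℝ] E) := fun x =>
    graphMap (ψ₁ x) (ρ x • Function.extend Subtype.val A 0 x)
  have hχ_mem (x : U) : χ x = graphMap (ψ₁ x) (ρ x • A x) := by
    simp only [χ, Subtype.val_injective.extend_apply]
  have hχ_notMem : ∀ x ∉ U, χ x = ψ₁ x := fun x hx => by
    have hx' : ¬∃ y : U, (y : M) = x := fun ⟨y, hy⟩ => hx (hy ▸ y.2)
    simp only [χ, Function.extend_apply' _ _ _ hx', Pi.zero_apply, smul_zero, graphMap_zero]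
  refine ⟨χ, continuous_graphMap hψ₁c (continuous_smul_extend_zero hU ρ.continuous hρU hA),
    fun x => ?_, hχ_notMem, fun x hx => ?_⟩
  · by_cases hx : x ∈ U
    · rw [hχ_mem ⟨x, hx⟩]
      exact (hψ₁ x).isNegIsotropicFrame_graphMap_smul
        ((hψ₁ x).isNegIsotropicFrame_graphMap_graphSlope hF (hψ₀ ⟨x, hx⟩))
        (abs_le.2 ⟨by linarith [(hρ x).1], (hρ x).2⟩)
    · rw [hχ_notMem x hx]
      exact hψ₁ x
  · rw [hχ_mem ⟨x, hVU hx⟩, hρV hx, Pi.one_apply, one_smul]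
    exact (hψ₁ x).range_graphMap_graphSlope hF (hψ₀ ⟨x, hVU hx⟩)

/-- Gluing of negative-definite isotropic half-dimensional families over a
topological base: a continuous, trivial-bundle rendering of the proposition on
gluing strictly negative maximally isotropic sub-bundles. -/
theorem stmt10 {E : Type*} [NormedAddCommGroup E] [NormedSpace ℂ E]
    [FiniteDimensional ℂ E]
    (ω : E →ₗ[ℂ] E →ₗ[ℂ] ℂ) (hsym : ∀ v w : E, ω v w = ω w v)
    (hnd : ∀ v : E, (∀ w : E, ω v w = 0) → v = 0)
    (n : ℕ) (hn : n = finrank ℂ E)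
    {F : Type*} [NormedAddCommGroup F] [NormedSpace ℝ F] [FiniteDimensional ℝ F]
    (hF : finrank ℝ F = n)
    {M : Type*} [TopologicalSpace M] [NormalSpace M]
    (U V : Set M) (hU : IsOpen U) (hVU : V ⊆ U) (hV : IsClosed V)
    (ψ₀ : U → (F →L[ℝ] E)) (hψ₀c : Continuous ψ₀)
    (ψ₁ : M → (F →L[ℝ] E)) (hψ₁c : Continuous ψ₁)
    (hψ₀ : ∀ x : U, Function.Injective (ψ₀ x) ∧
      ImIsotropic ω (LinearMap.range ((ψ₀ x : F →ₗ[ℝ] E))) ∧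
      ReNegDef ω (LinearMap.range ((ψ₀ x : F →ₗ[ℝ] E))))
    (hψ₁ : ∀ x : M, Function.Injective (ψ₁ x) ∧
      ImIsotropic ω (LinearMap.range ((ψ₁ x : F →ₗ[ℝ] E))) ∧
      ReNegDef ω (LinearMap.range ((ψ₁ x : F →ₗ[ℝ] E)))) :
    ∃ L : M → Submodule ℝ E,
      (∀ x : M, ImIsotropic ω (L x) ∧ ReNegDef ω (L x) ∧ finrank ℝ (L x) = n) ∧
      (∀ x : M, x ∉ U → L x = LinearMap.range ((ψ₁ x : F →ₗ[ℝ] E))) ∧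
      (∀ x : M, ∀ hx : x ∈ V, L x = LinearMap.range ((ψ₀ ⟨x, hVU hx⟩ : F →ₗ[ℝ] E))) ∧
      (∀ x : M, ∃ O : Set M, IsOpen O ∧ x ∈ O ∧
        ∃ χ : O → (F →L[ℝ] E), Continuous χ ∧
          ∀ y : O, Function.Injective (χ y) ∧
            LinearMap.range ((χ y : F →ₗ[ℝ] E)) = L y) := by
  obtain ⟨χ, hχc, hχ, hχU, hχV⟩ :=
    stmt10_general ω (hF.trans hn) hU hVU hV hψ₀c hψ₁c hψ₀ hψ₁
  exact ⟨fun x => LinearMap.range (χ x : F →ₗ[ℝ] E),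
    fun x => ⟨(hχ x).2.1, (hχ x).2.2, (LinearMap.finrank_range_of_inj (hχ x).1).trans hF⟩,
    fun x hx => by simp only [hχU x hx], hχV,
    fun x => ⟨Set.univ, isOpen_univ, Set.mem_univ x, fun y => χ y,
      hχc.comp continuous_subtype_val, fun y => ⟨(hχ y).1, rfl⟩⟩⟩
end
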